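/- Suppose that η_{pq}(y_ℓ) = δ_{ℓq}·y_p − δ_{ℓp}·y_q for all p, q, ℓ ∈ {1, …, n}, where η_{pq} := Σ_{m=0}^{n} (x_p^m·∂/∂x_q^m − x_q^m·∂/∂x_p^m) and δ is the Kronecker delta. Then the coefficients satisfy, for all a, b, c, p, q, ℓ ∈ {1, …, n}: A_{a,qc}^ℓ·δ_{pb} + A_{a,qb}^ℓ·δ_{pc} − A_{p,bc}^ℓ·δ_{qa} − A_{a,pc}^ℓ·δ_{qb} − A_{a,pb}^ℓ·δ_{qc} + A_{q,bc}^ℓ·δ_{pa} − A_{a,bc}^p·δ_{ℓq} + A_{a,bc}^q·δ_{ℓp} = 0. -/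

import Mathlib

/-- The `(n+1) × (n+1)` matrix whose `j`-th column is `(x_1^j, …, x_n^j, 1)`,
with entries in the polynomial ring in the variables `x_i^j`
(a variable is a pair `(i, j) : Fin n × Fin (n+1)`, `i` the coordinate index, `j` the vertex index). -/
noncomputable def Vmat (n : ℕ) : Matrix (Fin (n+1)) (Fin (n+1)) (MvPolynomial (Fin n × Fin (n+1)) ℝ) :=
  Matrix.of fun r c => if h : (r : ℕ) < n then MvPolynomial.X (⟨r, h⟩, c) else 1

/-- The basic determinant `V`. -/
noncomputable def Vpoly (n : ℕ) : MvPolynomial (Fin n × Fin (n+1)) ℝ := (Vmat n).det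

/-- The matrix of `V` with its `i`-th row replaced by `(x_j^0 x_k^0, …, x_j^n x_k^n)`. -/
noncomputable def Xmat (n : ℕ) (i j k : Fin n) :
    Matrix (Fin (n+1)) (Fin (n+1)) (MvPolynomial (Fin n × Fin (n+1)) ℝ) :=
  Matrix.of fun r c =>
    if (r : ℕ) = (i : ℕ) then MvPolynomial.X (j, c) * MvPolynomial.X (k, c)
    else if h : (r : ℕ) < n then MvPolynomial.X (⟨r, h⟩, c) else 1

/-- The basic determinant `X_{i,jk}`. -/
noncomputable def Xpoly (n : ℕ) (i j k : Fin n) : MvPolynomial (Fin n × Fin (n+1)) ℝ :=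
  (Xmat n i j k).det


/-- The Kronecker delta. -/
def kron {n : ℕ} (a b : Fin n) : ℝ := if a = b then 1 else 0

/-- `y_ℓ = Σ_{i,j,k} A_{i,jk}^ℓ X_{i,jk}`. -/
noncomputable def ypoly (n : ℕ) (A : Fin n → Fin n → Fin n → Fin n → ℝ) (ℓ : Fin n) :
    MvPolynomial (Fin n × Fin (n+1)) ℝ :=
  ∑ i : Fin n, ∑ j : Fin n, ∑ k : Fin n, A ℓ i j k • Xpoly n i j k

open MvPolynomial in
lemma derivation_prod_aux {S : Type*} [CommRing S] [Algebra ℝ S] {ι : Type*} [DecidableEq ι]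
    (D : Derivation ℝ S S) (s : Finset ι) (f : ι → S) :
    D (∏ i ∈ s, f i) = ∑ i ∈ s, D (f i) * ∏ j ∈ s.erase i, f j := by
  induction s using Finset.induction_on with
  | empty => simp
  | insert a s ha ih =>
    rw [Finset.prod_insert ha, D.leibniz, ih, Finset.sum_insert ha, Finset.erase_insert ha,
      smul_eq_mul, smul_eq_mul, mul_comm (∏ i ∈ s, f i), add_comm, Finset.mul_sum]
    congr 1
    refine Finset.sum_congr rfl fun i hi => ?_
    have hia : a ≠ i := by rintro rfl; exact ha hi
    rw [Finset.erase_insert_of_ne hia, Finset.prod_insert (by simp [ha])]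
    ring

lemma derivation_det_aux {S : Type*} [CommRing S] [Algebra ℝ S] {ι : Type*} [DecidableEq ι]
    [Fintype ι] (D : Derivation ℝ S S) (M : Matrix ι ι S) :
    D M.det = ∑ r, (M.updateRow r (fun c => D (M r c))).det := by
  have h : ∀ N : Matrix ι ι S, N.det = ∑ σ : Equiv.Perm ι, (Equiv.Perm.sign σ : ℤ) • ∏ i, N i (σ i) := by
    intro N
    rw [← Matrix.det_transpose, Matrix.det_apply]
    rfl
  rw [h M, map_sum]
  simp_rw [h (Matrix.updateRow _ _ _)]
  rw [Finset.sum_comm]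
  refine Finset.sum_congr rfl fun σ _ => ?_
  rw [map_zsmul, derivation_prod_aux, Finset.smul_sum]
  refine Finset.sum_congr rfl fun r _ => ?_
  congr 1
  rw [← Finset.mul_prod_erase Finset.univ _ (Finset.mem_univ r)]
  congr 1
  · simp
  · refine Finset.prod_congr rfl fun i hi => ?_
    rw [Matrix.updateRow_ne (Finset.ne_of_mem_erase hi)]

lemma Xmat_eq_aux (n : ℕ) (i j k : Fin n) :
    Xmat n i j k = (Vmat n).updateRow i.castSucc
      (fun c => MvPolynomial.X (j, c) * MvPolynomial.X (k, c)) := by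
  ext1 r c
  rw [Matrix.updateRow_apply]
  simp only [Xmat, Vmat, Matrix.of_apply, Fin.ext_iff, Fin.val_castSucc]

lemma Vmat_castSucc_aux (n : ℕ) (i : Fin n) (c : Fin (n+1)) :
    Vmat n i.castSucc c = MvPolynomial.X (i, c) := by
  simp [Vmat]

lemma Vmat_last_aux (n : ℕ) (c : Fin (n+1)) :
    Vmat n (Fin.last n) c = 1 := by
  simp [Vmat]

lemma det_update_swap_aux {S : Type*} [CommRing S] {ι : Type*} [DecidableEq ι] [Fintype ι]
    (V : Matrix ι ι S) (i r : ι) (h : r ≠ i) (g : ι → S) :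
    ((V.updateRow i g).updateRow r (V i)).det = - (V.updateRow r g).det := by
  have := Matrix.det_permute (Equiv.swap r i) (V.updateRow r g)
  rw [Equiv.Perm.sign_swap h] at this
  have e : (V.updateRow r g).submatrix (Equiv.swap r i) id
      = (V.updateRow i g).updateRow r (V i) := by
    ext1 s c
    simp only [Matrix.submatrix_apply, id, Matrix.updateRow_apply]
    by_cases h1 : s = r
    · subst h1; simp [h, h.symm]
    · by_cases h2 : s = i
      · subst h2; simp [h1]
      · simp [Equiv.swap_apply_of_ne_of_ne h1 h2, h1, h2]
  rw [← e, this]; simp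

lemma det_update_zero_aux {S : Type*} [CommRing S] {ι : Type*} [DecidableEq ι] [Fintype ι]
    (V : Matrix ι ι S) (i r s : ι) (h : s ≠ i) (h' : s ≠ r) (g : ι → S) :
    ((V.updateRow i g).updateRow r (V s)).det = 0 := by
  apply Matrix.det_zero_of_row_eq h'
  rw [Matrix.updateRow_self, Matrix.updateRow_ne h', Matrix.updateRow_ne h]

/-- the rotation derivation -/
noncomputable def rotD (n : ℕ) (p q : Fin n) :
    Derivation ℝ (MvPolynomial (Fin n × Fin (n+1)) ℝ) (MvPolynomial (Fin n × Fin (n+1)) ℝ) :=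
  ∑ m : Fin (n+1), ((MvPolynomial.X (p, m) : MvPolynomial (Fin n × Fin (n+1)) ℝ) • MvPolynomial.pderiv (q, m)
    - (MvPolynomial.X (q, m) : MvPolynomial (Fin n × Fin (n+1)) ℝ) • MvPolynomial.pderiv (p, m))

lemma rotD_apply (n : ℕ) (p q : Fin n) (f : MvPolynomial (Fin n × Fin (n+1)) ℝ) :
    rotD n p q f = ∑ m : Fin (n+1),
          (MvPolynomial.X (p, m) * MvPolynomial.pderiv (q, m) f
            - MvPolynomial.X (q, m) * MvPolynomial.pderiv (p, m) f) := by
  rw [rotD, ← Derivation.coeFnAddMonoidHom_apply, map_sum, Finset.sum_apply]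
  rfl

lemma rotD_X (n : ℕ) (p q j : Fin n) (c : Fin (n+1)) :
    rotD n p q (MvPolynomial.X (j, c)) =
      (if q = j then MvPolynomial.X (p, c) else 0) - (if p = j then MvPolynomial.X (q, c) else 0) := by
  rw [rotD_apply, Finset.sum_sub_distrib]
  congr 1
  · rw [Finset.sum_eq_single c]
    · simp only [MvPolynomial.pderiv_X, Pi.single_apply, Prod.mk.injEq, and_true, eq_comm]
      split_ifs <;> simp
    · intro b _ hb
      rw [MvPolynomial.pderiv_X_of_ne (by simp [hb.symm]), mul_zero]
    · simp
  · rw [Finset.sum_eq_single c]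
    · simp only [MvPolynomial.pderiv_X, Pi.single_apply, Prod.mk.injEq, and_true, eq_comm]
      split_ifs <;> simp
    · intro b _ hb
      rw [MvPolynomial.pderiv_X_of_ne (by simp [hb.symm]), mul_zero]
    · simp

lemma rotD_Xpoly (n : ℕ) (p q : Fin n) (hpq : p ≠ q) (i j k : Fin n) :
    rotD n p q (Xpoly n i j k) =
      (if q = j then Xpoly n i p k else 0) - (if p = j then Xpoly n i q k else 0)
      + (if q = k then Xpoly n i j p else 0) - (if p = k then Xpoly n i j q else 0)
      - (if p = i then Xpoly n q j k else 0) + (if q = i then Xpoly n p j k else 0) := by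
  have hsub : ∀ (M : Matrix (Fin (n+1)) (Fin (n+1)) (MvPolynomial (Fin n × Fin (n+1)) ℝ)) r u v,
      (M.updateRow r (u - v)).det = (M.updateRow r u).det - (M.updateRow r v).det := by
    intro M r u v
    have := Matrix.det_updateRow_add M r (u - v) v
    rw [sub_add_cancel] at this
    rw [this]; ring
  have hz : ∀ (M : Matrix (Fin (n+1)) (Fin (n+1)) (MvPolynomial (Fin n × Fin (n+1)) ℝ)) r,
      (M.updateRow r 0).det = 0 := by
    intro M r
    exact Matrix.det_eq_zero_of_row_eq_zero r (fun c => by simp)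
  have hrow : ∀ (P : Prop) [Decidable P] (M : Matrix (Fin (n+1)) (Fin (n+1)) (MvPolynomial (Fin n × Fin (n+1)) ℝ)) r u,
      (M.updateRow r (if P then u else 0)).det = if P then (M.updateRow r u).det else 0 := by
    intro P _ M r u
    split_ifs
    · rfl
    · exact hz _ _
  have hXp : ∀ i j k, Xpoly n i j k = ((Vmat n).updateRow i.castSucc
      (fun c => MvPolynomial.X (j, c) * MvPolynomial.X (k, c))).det := by
    intro i j k; rw [Xpoly, Xmat_eq_aux]
  rw [Xpoly, Xmat_eq_aux, derivation_det_aux, Fin.sum_univ_castSucc]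
  set g : Fin (n+1) → MvPolynomial (Fin n × Fin (n+1)) ℝ :=
    (fun c => MvPolynomial.X (j, c) * MvPolynomial.X (k, c)) with hg
  have hlast : (((Vmat n).updateRow i.castSucc g).updateRow (Fin.last n)
      (fun c => rotD n p q (((Vmat n).updateRow i.castSucc g) (Fin.last n) c))).det = 0 := by
    apply Matrix.det_eq_zero_of_row_eq_zero (Fin.last n)
    intro c
    rw [Matrix.updateRow_self, Matrix.updateRow_ne (Fin.castSucc_lt_last i).ne', Vmat_last_aux]
    simp
  rw [hlast, add_zero, ← Finset.add_sum_erase Finset.univ _ (Finset.mem_univ i)]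
  have hi : (((Vmat n).updateRow i.castSucc g).updateRow i.castSucc
      (fun c => rotD n p q (((Vmat n).updateRow i.castSucc g) i.castSucc c))).det =
      (if q = j then Xpoly n i p k else 0) - (if p = j then Xpoly n i q k else 0)
      + (if q = k then Xpoly n i j p else 0) - (if p = k then Xpoly n i j q else 0) := by
    have e : (fun c => rotD n p q (((Vmat n).updateRow i.castSucc g) i.castSucc c)) =
      ((if q = j then (fun c => MvPolynomial.X (p, c) * MvPolynomial.X (k, c)) else 0)
      - (if p = j then (fun c => MvPolynomial.X (q, c) * MvPolynomial.X (k, c)) else 0))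
      + ((if q = k then (fun c => MvPolynomial.X (j, c) * MvPolynomial.X (p, c)) else 0)
      - (if p = k then (fun c => MvPolynomial.X (j, c) * MvPolynomial.X (q, c)) else 0)) := by
      funext c
      rw [Matrix.updateRow_self, hg]
      simp only [Derivation.leibniz, rotD_X, smul_eq_mul, Pi.add_apply, Pi.sub_apply]
      split_ifs <;> simp <;> ring
    rw [e, Matrix.updateRow_idem, Matrix.det_updateRow_add, hsub, hsub, hrow, hrow, hrow, hrow]
    simp only [hXp]
    ring
  rw [hi]
  have hr : ∀ r ∈ Finset.univ.erase i, (((Vmat n).updateRow i.castSucc g).updateRow r.castSucc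
      (fun c => rotD n p q (((Vmat n).updateRow i.castSucc g) r.castSucc c))).det =
      (if q = r then (if p = i then - Xpoly n q j k else 0) else 0)
      - (if p = r then (if q = i then - Xpoly n p j k else 0) else 0) := by
    intro r hr
    have hri : r ≠ i := Finset.ne_of_mem_erase hr
    have hri' : r.castSucc ≠ i.castSucc := fun h => hri (Fin.castSucc_injective _ h)
    have e : (fun c => rotD n p q (((Vmat n).updateRow i.castSucc g) r.castSucc c)) =
      (if q = r then Vmat n p.castSucc else 0) - (if p = r then Vmat n q.castSucc else 0) := by
      funext c
      rw [Matrix.updateRow_ne hri', Vmat_castSucc_aux, rotD_X]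
      split_ifs <;> simp [Vmat_castSucc_aux]
    have key : ∀ s, s ≠ r → (((Vmat n).updateRow i.castSucc g).updateRow r.castSucc
        (Vmat n s.castSucc)).det = if s = i then - Xpoly n r j k else 0 := by
      intro s hs
      split_ifs with h
      · subst h; rw [det_update_swap_aux _ _ _ hri', hXp]
      · exact det_update_zero_aux _ _ _ _ (fun h' => h (Fin.castSucc_injective _ h'))
          (fun h' => hs (Fin.castSucc_injective _ h')) _
    rw [e, hsub, hrow, hrow]
    congr 1
    · split_ifs with h1 h2
      · subst h1; rw [key p hpq, if_pos h2]
      · subst h1; rw [key p hpq, if_neg h2]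
      · rfl
    · split_ifs with h1 h2
      · subst h1; rw [key q hpq.symm, if_pos h2]
      · subst h1; rw [key q hpq.symm, if_neg h2]
      · rfl
  rw [Finset.sum_congr rfl hr, Finset.sum_sub_distrib, Finset.sum_ite_eq, Finset.sum_ite_eq]
  simp only [Finset.mem_erase, Finset.mem_univ, and_true]
  by_cases h1 : p = i
  · subst h1
    simp [hpq, hpq.symm]
    ring
  · by_cases h2 : q = i
    · subst h2
      simp [hpq]
    · simp [h1, h2]

/-- evaluation point over `ℝ[t]` -/
noncomputable def evPt (n : ℕ) (a : Fin n) (u : Fin n → ℝ) (v : Fin n × Fin (n+1)) : Polynomial ℝ :=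
  Fin.lastCases (motive := fun _ => Polynomial ℝ) 0
    (fun c => if c = a then Polynomial.C (u v.1) else if v.1 = c then Polynomial.X else 0) v.2

/-- reduced matrix -/
noncomputable def redN (n : ℕ) (a : Fin n) (u : Fin n → ℝ) (i j k : Fin n) :
    Matrix (Fin n) (Fin n) (Polynomial ℝ) :=
  Matrix.of fun r c => if c = a then (if r = i then Polynomial.C (u j * u k) else Polynomial.C (u r))
    else if r = i then (if j = c ∧ k = c then Polynomial.X else 0) else if r = c then 1 else 0

lemma ev_Xpoly (n : ℕ) (a : Fin n) (u : Fin n → ℝ) (i j k : Fin n) :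
    MvPolynomial.aeval (evPt n a u) (Xpoly n i j k) =
      (∏ c : Fin n, if c = a then (1 : Polynomial ℝ) else Polynomial.X) * (redN n a u i j k).det := by
  rw [← Matrix.det_mul_row, Xpoly, AlgHom.map_det, Matrix.det_succ_column _ (Fin.last n),
    Finset.sum_eq_single (Fin.last n)]
  · have h1 : ((MvPolynomial.aeval (evPt n a u)).mapMatrix (Xmat n i j k)) (Fin.last n) (Fin.last n) = 1 := by
      simp [Xmat_eq_aux, (Fin.castSucc_lt_last i).ne', Vmat_last_aux]
    rw [h1, ← two_mul, pow_mul]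
    simp only [even_two, Even.neg_pow, one_pow, one_mul]
    congr 1
    ext1 r c
    simp only [Matrix.submatrix_apply, Fin.succAbove_last, AlgHom.mapMatrix_apply, Matrix.map_apply,
      Xmat_eq_aux, Matrix.updateRow_apply, Fin.castSucc_inj, Vmat_castSucc_aux, Matrix.of_apply, redN]
    by_cases hr : r = i
    · subst hr
      by_cases hc : c = a
      · simp [evPt, hc]
      · by_cases hj : j = c <;> by_cases hk : k = c <;> simp [evPt, hc, hj, hk]
    · by_cases hc : c = a <;> simp [evPt, hr, hc]
  · intro r _ hr
    obtain ⟨r, rfl⟩ := Fin.exists_castSucc_eq.2 hr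
    have h1 : ((MvPolynomial.aeval (evPt n a u)).mapMatrix (Xmat n i j k)) r.castSucc (Fin.last n) = 0 := by
      simp only [AlgHom.mapMatrix_apply, Matrix.map_apply,
        Xmat_eq_aux, Matrix.updateRow_apply, Fin.castSucc_inj, Vmat_castSucc_aux]
      split_ifs <;> simp [evPt]
    rw [h1]; simp
  · simp

lemma redN_zero (n : ℕ) (a : Fin n) (u : Fin n → ℝ) (i j k : Fin n) :
    Polynomial.evalRingHom 0 (redN n a u i j k).det = if i = a then u j * u k else 0 := by
  rw [RingHom.map_det]
  split_ifs with h
  · subst h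
    have : (Polynomial.evalRingHom 0).mapMatrix (redN n i u i j k) =
        (1 : Matrix (Fin n) (Fin n) ℝ).updateCol i (fun r => if r = i then u j * u k else u r) := by
      ext1 r c
      simp only [RingHom.mapMatrix_apply, Matrix.map_apply, redN, Matrix.of_apply,
        Matrix.updateCol_apply, Matrix.one_apply]
      by_cases hc : c = i
      · by_cases hr : r = i <;> simp [hc, hr]
      · by_cases hr : r = i
        · subst hr
          simp only [hc, Ne.symm hc, if_false, if_true]
          split_ifs <;> simp
        · simp only [hc, hr, if_false]
          split_ifs <;> simp
    rw [this, ← Matrix.cramer_apply, Matrix.cramer_one]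
    simp
  · apply Matrix.det_eq_zero_of_column_eq_zero i
    intro r
    simp only [RingHom.mapMatrix_apply, Matrix.map_apply, redN, Matrix.of_apply, h, if_false]
    split_ifs <;> simp

lemma Xpoly_indep (n : ℕ) (B : Fin n → Fin n → Fin n → ℝ) (hB : ∀ i j k, B i j k = B i k j)
    (h : ∑ i : Fin n, ∑ j : Fin n, ∑ k : Fin n, B i j k • Xpoly n i j k = 0) (a b c : Fin n) :
    B a b c = 0 := by
  have key : ∀ u : Fin n → ℝ, ∑ j, ∑ k, B a j k * (u j * u k) = 0 := by
    intro u
    have h1 := congrArg (MvPolynomial.aeval (evPt n a u)) h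
    simp only [map_sum, map_smul, ev_Xpoly, map_zero, ← mul_smul_comm, ← Finset.mul_sum] at h1
    have hne : (∏ c : Fin n, if c = a then (1 : Polynomial ℝ) else Polynomial.X) ≠ 0 := by
      rw [Finset.prod_ne_zero_iff]
      intro c _
      split_ifs
      · exact one_ne_zero
      · exact Polynomial.X_ne_zero
    have h2 := (mul_eq_zero.1 h1).resolve_left hne
    have h3 := congrArg (Polynomial.evalRingHom (0:ℝ)) h2
    simp only [map_sum, Polynomial.smul_eq_C_mul, map_mul, redN_zero, map_zero] at h3
    rw [Finset.sum_eq_single a] at h3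
    · simpa using h3
    · intro i _ hi
      simp [hi]
    · simp
  have e1 : ∀ x y : Fin n, ∑ j, ∑ k, B a j k * ((Pi.single x 1 : Fin n → ℝ) j * (Pi.single y 1 : Fin n → ℝ) k) = B a x y := by
    intro x y
    simp [Pi.single_apply]
  have hb := key (Pi.single b 1)
  have hc := key (Pi.single c 1)
  have hbc := key (Pi.single b 1 + Pi.single c 1)
  simp only [Pi.add_apply, add_mul, mul_add, Finset.sum_add_distrib, e1] at hb hc hbc
  have := hB a b c
  linarith

lemma rotD_ypoly (n : ℕ) (A : Fin n → Fin n → Fin n → Fin n → ℝ) (p q ℓ : Fin n) (hpq : p ≠ q) :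
    rotD n p q (ypoly n A ℓ) = ∑ a : Fin n, ∑ b : Fin n, ∑ c : Fin n,
      (A ℓ a q c * kron p b + A ℓ a b q * kron p c - A ℓ p b c * kron q a
        - A ℓ a p c * kron q b - A ℓ a b p * kron q c + A ℓ q b c * kron p a) • Xpoly n a b c := by
  simp only [ypoly, map_sum, Derivation.map_smul, rotD_Xpoly n p q hpq, smul_add, smul_sub, add_smul, sub_smul,
    Finset.sum_add_distrib, Finset.sum_sub_distrib]
  have H1 : ∀ (s t : Fin n), (∑ a : Fin n, ∑ b : Fin n, ∑ c : Fin n, A ℓ a b c • (if t = b then Xpoly n a s c else 0))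
      = ∑ a : Fin n, ∑ b : Fin n, ∑ c : Fin n, (A ℓ a t c * kron s b) • Xpoly n a b c := by
    intro s t
    refine Finset.sum_congr rfl fun a _ => ?_
    rw [Finset.sum_comm]
    conv_rhs => rw [Finset.sum_comm]
    simp [kron, ite_smul]
  have H2 : ∀ (s t : Fin n), (∑ a : Fin n, ∑ b : Fin n, ∑ c : Fin n, A ℓ a b c • (if t = c then Xpoly n a b s else 0))
      = ∑ a : Fin n, ∑ b : Fin n, ∑ c : Fin n, (A ℓ a b t * kron s c) • Xpoly n a b c := by
    intro s t
    simp [kron, ite_smul]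
  have H3 : ∀ (s t : Fin n), (∑ a : Fin n, ∑ b : Fin n, ∑ c : Fin n, A ℓ a b c • (if t = a then Xpoly n s b c else 0))
      = ∑ a : Fin n, ∑ b : Fin n, ∑ c : Fin n, (A ℓ t b c * kron s a) • Xpoly n a b c := by
    intro s t
    rw [Finset.sum_eq_single t]
    on_goal 1 => symm; rw [Finset.sum_eq_single s]
    · simp [kron]
    · intro x _ hx
      simp [kron, hx.symm]
    · simp
    · intro x _ hx
      simp [hx.symm]
    · simp
  simp only [H1, H2, H3]
  abel

/-- If `η_{pq}(y_ℓ) = δ_{ℓq} y_p − δ_{ℓp} y_q` for all `p, q, ℓ`, then the coefficients satisfy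
the eight-term linear relations coming from rotation covariance. -/
theorem coeff_rotation_covariance (n : ℕ) (hn : 1 ≤ n)
    (A : Fin n → Fin n → Fin n → Fin n → ℝ)
    (hA : ∀ ℓ i j k, A ℓ i j k = A ℓ i k j)
    (hy : ∀ p q ℓ : Fin n,
      ∑ m : Fin (n+1),
          (MvPolynomial.X (p, m) * MvPolynomial.pderiv (q, m) (ypoly n A ℓ)
            - MvPolynomial.X (q, m) * MvPolynomial.pderiv (p, m) (ypoly n A ℓ)) =
        kron ℓ q • ypoly n A p - kron ℓ p • ypoly n A q) :
    ∀ a b c p q ℓ : Fin n,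
      A ℓ a q c * kron p b + A ℓ a q b * kron p c - A ℓ p b c * kron q a
        - A ℓ a p c * kron q b - A ℓ a p b * kron q c + A ℓ q b c * kron p a
        - A p a b c * kron ℓ q + A q a b c * kron ℓ p = 0 := by
  intro a b c p q ℓ
  by_cases hpq : p = q
  · subst hpq; ring
  have h1 := hy p q ℓ
  rw [← rotD_apply, rotD_ypoly n A p q ℓ hpq, ← sub_eq_zero] at h1
  have h2 : ∑ a : Fin n, ∑ b : Fin n, ∑ c : Fin n,
      (A ℓ a q c * kron p b + A ℓ a b q * kron p c - A ℓ p b c * kron q a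
        - A ℓ a p c * kron q b - A ℓ a b p * kron q c + A ℓ q b c * kron p a
        - A p a b c * kron ℓ q + A q a b c * kron ℓ p) • Xpoly n a b c = 0 := by
    rw [← h1]
    simp only [ypoly, Finset.smul_sum, ← Finset.sum_sub_distrib]
    refine Finset.sum_congr rfl fun a _ => Finset.sum_congr rfl fun b _ =>
      Finset.sum_congr rfl fun c _ => ?_
    module
  have h3 := Xpoly_indep n (fun a b c => A ℓ a q c * kron p b + A ℓ a b q * kron p c
        - A ℓ p b c * kron q a
        - A ℓ a p c * kron q b - A ℓ a b p * kron q c + A ℓ q b c * kron p a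
        - A p a b c * kron ℓ q + A q a b c * kron ℓ p) (by
      intro i j k
      rw [hA ℓ i q k, hA ℓ i j q, hA ℓ p j k, hA ℓ i p k, hA ℓ i j p, hA ℓ q j k, hA p i j k,
        hA q i j k]
      ring) h2 a b c
  rw [hA ℓ a b q, hA ℓ a b p] at h3
  exact h3
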